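/- If ρ_AB is a classical-quantum state (or quantum-classical state), then for α ∈ [1/2,1), H̃_α^↑(A|B)_ρ ≥ 0. -/

import Mathlib

open Matrix MeasureTheory
open scoped Kronecker ComplexOrder

noncomputable def mpow {n : Type*} [Fintype n] [DecidableEq n]
    (A : Matrix n n ℂ) (p : ℝ) : Matrix n n ℂ :=
  if hA : A.IsHermitian then
    (hA.eigenvectorUnitary : Matrix n n ℂ) *
      Matrix.diagonal (fun i => ((hA.eigenvalues i ^ p : ℝ) : ℂ)) *
      (star (hA.eigenvectorUnitary : Matrix n n ℂ))
  else 0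

noncomputable def traceNorm {n : Type*} [Fintype n] [DecidableEq n]
    (A : Matrix n n ℂ) : ℝ :=
  (mpow (Aᴴ * A) (1/2)).trace.re

def IsDensity {n : Type*} [Fintype n] [DecidableEq n] (ρ : Matrix n n ℂ) : Prop :=
  ρ.PosSemidef ∧ ρ.trace = 1

noncomputable def sandTr {a b : Type*} [Fintype a] [DecidableEq a] [Fintype b] [DecidableEq b]
    (α : ℝ) (ρ : Matrix (a × b) (a × b) ℂ) (η : Matrix b b ℂ) : ℝ :=
  (mpow (((1 : Matrix a a ℂ) ⊗ₖ mpow η ((1 - α)/(2*α))) * ρ *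
      ((1 : Matrix a a ℂ) ⊗ₖ mpow η ((1 - α)/(2*α)))) α).trace.re

noncomputable def Hcond {a b : Type*} [Fintype a] [DecidableEq a] [Fintype b] [DecidableEq b]
    (α : ℝ) (ρ : Matrix (a × b) (a × b) ℂ) : ℝ :=
  ⨆ η : {η : Matrix b b ℂ // IsDensity η}, (1/(1-α)) * Real.logb 2 (sandTr α ρ η)

/-- `ρ_AB` is classical on `A` (block diagonal in the standard basis of `A`),
i.e. of the form `Σ_a p(a) |a⟩⟨a| ⊗ ρ_B^a`. -/
def ClassicalA {a b : Type*} (ρ : Matrix (a × b) (a × b) ℂ) : Prop :=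
  ∀ p q : a × b, p.1 ≠ q.1 → ρ p q = 0

/-- `ρ_AB` is classical on `B`. -/
def ClassicalB {a b : Type*} (ρ : Matrix (a × b) (a × b) ℂ) : Prop :=
  ∀ p q : a × b, p.2 ≠ q.2 → ρ p q = 0

/-!
A separable state, and in particular one that is classical on `A` or on `B`, satisfies the reduction
criterion `ρ ≤ 1 ⊗ ρ_B`, because `X ⊗ Y ≤ tr X • (1 ⊗ Y)` for positive semidefinite `X` and `Y`.
This makes the marginal `η = ρ_B` a good enough candidate in the supremum. Since `X* X` and `X X*`
have the same spectrum, with `p = (1 - α) / α ∈ (0, 1]` the sandwiched trace at `η` equals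
`tr (√ρ (1 ⊗ η) ^ p √ρ) ^ α`. Operator monotonicity of `x ↦ x ^ p` and of `x ↦ x ^ α` bounds this
below by `tr (√ρ ρ ^ p √ρ) ^ α = tr ρ = 1`, because `(1 + p) α = 1`.
-/

section PartialTrace

/-- The partial trace over the first tensor factor; for a state `ρ_AB` it is the marginal `ρ_B`. -/
def traceLeft {a b R : Type*} [Fintype a] [AddCommMonoid R] (M : Matrix (a × b) (a × b) R) :
    Matrix b b R :=
  ∑ i, M.submatrix (Prod.mk i) (Prod.mk i)

variable {a b R : Type*} [Fintype a]

theorem traceLeft_zero [AddCommMonoid R] : traceLeft (0 : Matrix (a × b) (a × b) R) = 0 := by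
  simp [traceLeft]

theorem traceLeft_add [AddCommMonoid R] (M N : Matrix (a × b) (a × b) R) :
    traceLeft (M + N) = traceLeft M + traceLeft N := by
  simp [traceLeft, submatrix_add, Finset.sum_add_distrib]

theorem traceLeft_kronecker [NonUnitalNonAssocSemiring R] (X : Matrix a a R) (Y : Matrix b b R) :
    traceLeft (X ⊗ₖ Y) = X.trace • Y := by
  ext j k
  simp [traceLeft, Matrix.sum_apply, trace, Finset.sum_mul]

theorem trace_traceLeft [Fintype b] [AddCommMonoid R] (M : Matrix (a × b) (a × b) R) :
    (traceLeft M).trace = M.trace := by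
  rw [traceLeft, trace_sum]
  simp only [trace, diag_apply, submatrix_apply, Fintype.sum_prod_type]

theorem IsDensity.traceLeft [DecidableEq a] [Fintype b] [DecidableEq b]
    {ρ : Matrix (a × b) (a × b) ℂ} (hρ : IsDensity ρ) : IsDensity (traceLeft ρ) :=
  ⟨posSemidef_sum _ fun _ _ => hρ.1.submatrix _, by rw [trace_traceLeft, hρ.2]⟩

end PartialTrace

section Separable

open scoped MatrixOrder

variable {𝕜 n a b : Type*} [RCLike 𝕜]

/-- Separability of an unnormalised bipartite state: `M` is a finite sum of tensor products of
positive semidefinite matrices. -/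
def IsSeparableState (M : Matrix (a × b) (a × b) ℂ) : Prop :=
  M ∈ AddSubmonoid.closure
    {N | ∃ (X : Matrix a a ℂ) (Y : Matrix b b ℂ), X.PosSemidef ∧ Y.PosSemidef ∧ X ⊗ₖ Y = N}

theorem posSemidef_single [DecidableEq n] (i : n) : (single i i (1 : 𝕜)).PosSemidef := by
  rw [← diagonal_single, posSemidef_diagonal_iff]
  exact Pi.single_nonneg.mpr zero_le_one

theorem ClassicalA.isSeparableState [Finite a] {ρ : Matrix (a × b) (a × b) ℂ}
    (h : ClassicalA ρ) (hρ : ρ.PosSemidef) : IsSeparableState ρ := by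
  classical
  have := Fintype.ofFinite a
  have hsum : ρ = ∑ i, single i i (1 : ℂ) ⊗ₖ ρ.submatrix (Prod.mk i) (Prod.mk i) := by
    ext ⟨i, j⟩ ⟨i', j'⟩
    rcases eq_or_ne i i' with rfl | hi
    · simp [Matrix.sum_apply, single_apply]
    · simp [Matrix.sum_apply, ← diagonal_single, hi, h (i, j) (i', j') hi]
  rw [hsum]
  exact sum_mem fun i _ => AddSubmonoid.subset_closure
    ⟨_, _, posSemidef_single i, hρ.submatrix _, rfl⟩

theorem ClassicalB.isSeparableState [Finite b] {ρ : Matrix (a × b) (a × b) ℂ}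
    (h : ClassicalB ρ) (hρ : ρ.PosSemidef) : IsSeparableState ρ := by
  classical
  have := Fintype.ofFinite b
  have hsum : ρ = ∑ j, ρ.submatrix (·, j) (·, j) ⊗ₖ single j j (1 : ℂ) := by
    ext ⟨i, j⟩ ⟨i', j'⟩
    rcases eq_or_ne j j' with rfl | hj
    · simp [Matrix.sum_apply, single_apply]
    · simp [Matrix.sum_apply, ← diagonal_single, hj, h (i, j) (i', j') hj]
  rw [hsum]
  exact sum_mem fun j _ => AddSubmonoid.subset_closure
    ⟨_, _, hρ.submatrix _, posSemidef_single j, rfl⟩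

theorem le_trace_smul_one [Fintype n] [DecidableEq n] {M : Matrix n n 𝕜} (hM : M.PosSemidef) :
    M ≤ M.trace • (1 : Matrix n n 𝕜) := by
  have hMH := hM.isHermitian
  have htrace : M.trace • (1 : Matrix n n 𝕜) =
      algebraMap ℝ (Matrix n n 𝕜) (∑ i, hMH.eigenvalues i) := by
    rw [hMH.trace_eq_sum_eigenvalues, Algebra.algebraMap_eq_smul_one,
      RCLike.real_smul_eq_coe_smul (K := 𝕜), RCLike.ofReal_sum]
  rw [htrace]
  refine le_algebraMap_of_spectrum_le (fun x hx => ?_) hMH.isSelfAdjoint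
  obtain ⟨i, rfl⟩ := hMH.spectrum_real_eq_range_eigenvalues ▸ hx
  exact Finset.single_le_sum (fun j _ => hM.eigenvalues_nonneg j) (Finset.mem_univ i)

theorem kronecker_le_one_kronecker_traceLeft [Fintype a] [DecidableEq a] [Finite b]
    {X : Matrix a a ℂ} {Y : Matrix b b ℂ} (hX : X.PosSemidef) (hY : Y.PosSemidef) :
    X ⊗ₖ Y ≤ (1 : Matrix a a ℂ) ⊗ₖ traceLeft (X ⊗ₖ Y) := by
  have hdiff : (1 : Matrix a a ℂ) ⊗ₖ traceLeft (X ⊗ₖ Y) - X ⊗ₖ Y = (X.trace • 1 - X) ⊗ₖ Y := by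
    rw [traceLeft_kronecker, kronecker_smul, ← smul_kronecker, sub_eq_iff_eq_add, ← add_kronecker,
      sub_add_cancel]
  rw [Matrix.le_iff, hdiff]
  exact (Matrix.le_iff.mp (le_trace_smul_one hX)).kronecker hY

theorem IsSeparableState.le_one_kronecker_traceLeft [Fintype a] [DecidableEq a] [Finite b]
    {M : Matrix (a × b) (a × b) ℂ} (hM : IsSeparableState M) :
    M ≤ (1 : Matrix a a ℂ) ⊗ₖ traceLeft M := by
  induction hM using AddSubmonoid.closure_induction with
  | mem _ hN =>
    obtain ⟨X, Y, hX, hY, rfl⟩ := hN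
    exact kronecker_le_one_kronecker_traceLeft hX hY
  | zero => rw [traceLeft_zero, kronecker_zero]
  | add N N' _ _ hN hN' =>
    rw [traceLeft_add, kronecker_add]
    exact add_le_add hN hN'

end Separable

section RealPowers

open CFC

variable {A : Type*} [CStarAlgebra A] [PartialOrder A] [StarOrderedRing A]

theorem cfc_rpow_add_of_nonneg (a : A) {x y : ℝ} (hx : 0 ≤ x) (hy : 0 ≤ y) :
    a ^ (x + y) = a ^ x * a ^ y := by
  simp only [rpow_def, ← cfc_mul (· ^ x) (· ^ y) a (NNReal.continuous_rpow_const hx).continuousOn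
    (NNReal.continuous_rpow_const hy).continuousOn, NNReal.rpow_add_of_nonneg _ hx hy]

theorem sqrt_mul_rpow_mul_sqrt (a : A) {p : ℝ} (hp : 0 ≤ p) :
    sqrt a * a ^ p * sqrt a = a ^ (1 + p) := by
  rw [sqrt_eq_rpow, ← cfc_rpow_add_of_nonneg a (by norm_num) hp,
    ← cfc_rpow_add_of_nonneg a (by positivity) (by norm_num)]
  congr 1
  ring

-- A case of Furuta's inequality, where operator monotonicity of `x ↦ x ^ p` suffices.
theorem le_sqrt_mul_rpow_mul_sqrt_rpow {a b : A} (ha : 0 ≤ a) (hab : a ≤ b) {p : ℝ}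
    (hp : p ∈ Set.Icc 0 1) : a ≤ (sqrt a * b ^ p * sqrt a) ^ (1 + p)⁻¹ := by
  have hp0 : 0 < 1 + p := by linarith [hp.1]
  have hconj : a ^ (1 + p) ≤ sqrt a * b ^ p * sqrt a := by
    rw [← sqrt_mul_rpow_mul_sqrt a hp.1]
    exact (IsSelfAdjoint.of_nonneg (sqrt_nonneg a)).conjugate_le_conjugate (rpow_le_rpow hp hab)
  calc
    a = (a ^ (1 + p)) ^ (1 + p)⁻¹ := by
      rw [rpow_rpow_of_exponent_nonneg a _ _ hp0.le (inv_nonneg.mpr hp0.le),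
        mul_inv_cancel₀ hp0.ne', rpow_one a]
    _ ≤ _ := rpow_le_rpow ⟨inv_nonneg.mpr hp0.le, inv_le_one_of_one_le₀ (by linarith [hp.1])⟩ hconj

end RealPowers

section MatrixPowers

open scoped MatrixOrder Matrix.Norms.L2Operator

theorem one_kronecker_nonneg {a b : Type*} [Finite a] [DecidableEq a] [Finite b]
    {X : Matrix b b ℂ} (hX : 0 ≤ X) : 0 ≤ (1 : Matrix a a ℂ) ⊗ₖ X :=
  (PosSemidef.one.kronecker hX.posSemidef).nonneg

variable {n a b : Type*} [Fintype n] [DecidableEq n] [Fintype a] [DecidableEq a]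
  [Fintype b] [DecidableEq b]

theorem mpow_eq_cfc {M : Matrix n n ℂ} (hM : M.IsHermitian) (p : ℝ) :
    mpow M p = cfc (fun x : ℝ => x ^ p) M := by
  rw [hM.cfc_eq, mpow, dif_pos hM, IsHermitian.cfc, Unitary.conjStarAlgAut_apply]
  rfl

theorem mpow_eq_rpow {M : Matrix n n ℂ} (hM : 0 ≤ M) (p : ℝ) : mpow M p = M ^ p := by
  rw [mpow_eq_cfc (IsSelfAdjoint.of_nonneg hM), CFC.rpow_eq_cfc_real hM]

theorem trace_mpow {M : Matrix n n ℂ} (hM : M.IsHermitian) (p : ℝ) :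
    (mpow M p).trace = (M.charpoly.roots.map fun z : ℂ => ((z.re ^ p : ℝ) : ℂ)).sum := by
  rw [hM.roots_charpoly_eq_eigenvalues, mpow, dif_pos hM, trace_mul_comm, ← mul_assoc]
  simp [trace, Multiset.map_map]

theorem trace_mpow_conjTranspose_mul_self (X : Matrix n n ℂ) (p : ℝ) :
    (mpow (Xᴴ * X) p).trace = (mpow (X * Xᴴ) p).trace := by
  rw [trace_mpow (isHermitian_conjTranspose_mul_self X),
    trace_mpow (isHermitian_mul_conjTranspose_self X), charpoly_mul_comm]

variable (a b) in
/-- The embedding `X ↦ 1 ⊗ X` of the observables of the system `b` into those of `a × b`, bundled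
as a star algebra homomorphism so that it commutes with the functional calculus. -/
def oneKroneckerHom : Matrix b b ℂ →⋆ₐ[ℂ] Matrix (a × b) (a × b) ℂ where
  toFun X := (1 : Matrix a a ℂ) ⊗ₖ X
  map_one' := one_kronecker_one
  map_mul' X Y := by rw [← mul_kronecker_mul, one_mul]
  map_zero' := kronecker_zero _
  map_add' := kronecker_add _
  commutes' r := by
    rw [Algebra.algebraMap_eq_smul_one, Algebra.algebraMap_eq_smul_one, kronecker_smul,
      one_kronecker_one]
  map_star' X := by
    rw [star_eq_conjTranspose, star_eq_conjTranspose, conjTranspose_kronecker, conjTranspose_one]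

theorem one_kronecker_mpow {X : Matrix b b ℂ} (hX : X.IsHermitian) (p : ℝ) :
    (1 : Matrix a a ℂ) ⊗ₖ mpow X p = mpow ((1 : Matrix a a ℂ) ⊗ₖ X) p := by
  have hX' : ((1 : Matrix a a ℂ) ⊗ₖ X).IsHermitian := by
    rw [IsHermitian, conjTranspose_kronecker, conjTranspose_one, hX.eq]
  rw [mpow_eq_cfc hX, mpow_eq_cfc hX']
  exact StarAlgHom.map_cfc (oneKroneckerHom a b) (fun x : ℝ => x ^ p) X
    (finite_real_spectrum.continuousOn _)
    (LinearMap.continuous_of_finiteDimensional (oneKroneckerHom a b).toAlgHom.toLinearMap)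
    hX.isSelfAdjoint hX'.isSelfAdjoint

theorem trace_mpow_rpow_mul_mul_rpow {K M : Matrix n n ℂ} (hM : 0 ≤ M) {q : ℝ} (hq : 0 ≤ q)
    (p : ℝ) : (mpow (K ^ q * M * K ^ q) p).trace =
      ((CFC.sqrt M * K ^ (2 * q) * CFC.sqrt M) ^ p).trace := by
  have hsqrt : (CFC.sqrt M)ᴴ = CFC.sqrt M := IsSelfAdjoint.of_nonneg (CFC.sqrt_nonneg M)
  have hpow : (K ^ q)ᴴ = K ^ q := IsSelfAdjoint.of_nonneg CFC.rpow_nonneg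
  have hleft : K ^ q * M * K ^ q = (CFC.sqrt M * K ^ q)ᴴ * (CFC.sqrt M * K ^ q) := by
    rw [conjTranspose_mul, hsqrt, hpow, mul_assoc, mul_assoc, ← mul_assoc (CFC.sqrt M),
      CFC.sqrt_mul_sqrt_self M]
  have hright : CFC.sqrt M * K ^ q * (CFC.sqrt M * K ^ q)ᴴ =
      CFC.sqrt M * K ^ (2 * q) * CFC.sqrt M := by
    rw [conjTranspose_mul, hsqrt, hpow, two_mul, cfc_rpow_add_of_nonneg K hq hq]
    simp only [mul_assoc]
  rw [hleft, trace_mpow_conjTranspose_mul_self,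
    mpow_eq_rpow (posSemidef_self_mul_conjTranspose _).nonneg, hright]

end MatrixPowers

section SandwichedTrace

open scoped MatrixOrder Matrix.Norms.L2Operator

variable {a b : Type*} [Fintype a] [DecidableEq a] [Fintype b] [DecidableEq b]
  {α : ℝ} {ρ : Matrix (a × b) (a × b) ℂ} {η : Matrix b b ℂ}

theorem sandTr_eq_trace_rpow (hα : α ∈ Set.Ioc 0 1) (hρ : 0 ≤ ρ) (hη : 0 ≤ η) :
    sandTr α ρ η =
      ((CFC.sqrt ρ * ((1 : Matrix a a ℂ) ⊗ₖ η) ^ ((1 - α) / α) * CFC.sqrt ρ) ^ α).trace.re := by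
  have hq : 0 ≤ (1 - α) / (2 * α) := div_nonneg (by linarith [hα.2]) (by linarith [hα.1])
  have hexp : 2 * ((1 - α) / (2 * α)) = (1 - α) / α := by
    have := hα.1.ne'
    field_simp
  rw [sandTr, one_kronecker_mpow hη.posSemidef.isHermitian, mpow_eq_rpow (one_kronecker_nonneg hη),
    trace_mpow_rpow_mul_mul_rpow hρ hq, hexp]

theorem trace_re_le_sandTr (hα : α ∈ Set.Icc (1 / 2) 1) (hρ : 0 ≤ ρ) (hη : 0 ≤ η)
    (hle : ρ ≤ (1 : Matrix a a ℂ) ⊗ₖ η) : ρ.trace.re ≤ sandTr α ρ η := by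
  have hα0 : 0 < α := by linarith [hα.1]
  have hp : (1 - α) / α ∈ Set.Icc (0 : ℝ) 1 :=
    ⟨div_nonneg (by linarith [hα.2]) hα0.le, (div_le_one hα0).mpr (by linarith [hα.1])⟩
  have hinv : (1 + (1 - α) / α)⁻¹ = α := by field_simp; ring
  have hfuruta := le_sqrt_mul_rpow_mul_sqrt_rpow hρ hle hp
  rw [hinv] at hfuruta
  have htrace := (Matrix.le_iff.mp hfuruta).trace_nonneg
  rw [trace_sub, sub_nonneg] at htrace
  rw [sandTr_eq_trace_rpow ⟨hα0, hα.2⟩ hρ hη]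
  exact (Complex.le_def.mp htrace).1

theorem Hcond_nonneg_classical_general (hα : α ∈ Set.Ico (1 / 2) 1) (hρ : IsDensity ρ)
    (hη : IsDensity η) (hle : ρ ≤ (1 : Matrix a a ℂ) ⊗ₖ η) : 0 ≤ Hcond α ρ := by
  have hone : 1 ≤ sandTr α ρ η := by
    simpa [hρ.2] using trace_re_le_sandTr ⟨hα.1, hα.2.le⟩ hρ.1.nonneg hη.1.nonneg hle
  refine Real.iSup_nonneg' ⟨⟨η, hη⟩, mul_nonneg ?_ (Real.logb_nonneg one_lt_two hone)⟩
  exact one_div_nonneg.mpr (sub_nonneg.mpr hα.2.le)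

end SandwichedTrace

/-- For classical-quantum or quantum-classical states, the sandwiched Rényi conditional
entropy is nonnegative for `α ∈ [1/2,1)`. -/
theorem Hcond_nonneg_classical {dA dB : ℕ}
    (α : ℝ) (hα : α ∈ Set.Ico (1/2 : ℝ) 1)
    (ρ : Matrix (Fin dA × Fin dB) (Fin dA × Fin dB) ℂ) (hρ : IsDensity ρ)
    (hcl : ClassicalA ρ ∨ ClassicalB ρ) :
    0 ≤ Hcond α ρ := by
  have hsep : IsSeparableState ρ := hcl.elim (·.isSeparableState hρ.1) (·.isSeparableState hρ.1)
  exact Hcond_nonneg_classical_general hα hρ hρ.traceLeft hsep.le_one_kronecker_traceLeft
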